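/- Let k ≥ 2 be an integer, N a positive integer, and q a complex number with 0 < |q| < 1. Then 1 + Σ_{m=1}^∞ q^m · Σ_{l=1}^{m} (f^k_{m,l}(q)/(q;q)_l) · (q^N;q)_l · (q^{1−N};q)_l = q^{k·N(N−1)}, where only finitely many terms of the double sum are nonzero (every term with l ≥ N vanishes, and f^k_{m,l}(q) = 0 for m > kl). -/

import Mathlib

/-!
Put `n_t = i_t + ⋯ + i_k`. Then `l = n_1`, `m = n_1 + ⋯ + n_k`, and the double sum, together with
its leading `1` (the term `m = l = 0`), becomes the multiple sum over `i_1, …, i_k ≥ 0` of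
`q^{n_1 + ⋯ + n_k + n_2² + ⋯ + n_k²} A(n_1) / ((q;q)_{i_1} ⋯ (q;q)_{i_k})`
with `A(n) = (q^N;q)_n (q^{1-N};q)_n`, which vanishes for `n ≥ N`.

The terminating q-Chu–Vandermonde sum `∑ₛ qˢ (a;q)ₛ (q^{-M};q)ₛ / (q;q)ₛ = a^M` (`chu`) gives
`∑ₛ qˢ A(s+r) / (q;q)ₛ = q^{N(N-1) - r² - r} A(r)` (`tsum_poch`). Summing over `i_1` with
`r = n_2` therefore reproduces the same multiple sum with one variable fewer and an extra factor
`q^{N(N-1)}` (a Bailey chain), so the `k`-fold sum is `q^{kN(N-1)}` (`tsum_term`).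
-/

open Finset

/-- Finite q-Pochhammer symbol `(a;q)_n`. -/
noncomputable def qPoch (a q : ℂ) (n : ℕ) : ℂ := ∏ j ∈ Finset.range n, (1 - a * q ^ j)

/-- `1/(q;q)_a` with the convention that it is `0` for `a < 0`. -/
noncomputable def qFactInv (q : ℂ) (a : ℤ) : ℂ :=
  if 0 ≤ a then (qPoch q q a.toNat)⁻¹ else 0

/-- The polynomial `f^k_{m,l}(q)`, a sum over nonnegative integers `i_3, …, i_k`
    (here `i ⟨j⟩` represents `i_{j+3}`), with
    `i_2 := m − l − Σ_{j=3}^{k} (j−1)i_j`, `i_1 := 2l + Σ_{j=3}^{k} (j−2)i_j − m`, of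
    `q^{Q(i_2,…,i_k)} (q;q)_l / ((q;q)_{i_k} ⋯ (q;q)_{i_3} (q;q)_{i_2} (q;q)_{i_1})`, where
    `Q(i_2,…,i_k) = i_k² + (i_k+i_{k−1})² + ⋯ + (i_k+⋯+i_2)²`. -/
noncomputable def fpoly (k : ℕ) (q : ℂ) (m l : ℤ) : ℂ :=
  ∑' i : Fin (k - 2) → ℕ,
    q ^ ((∑ t ∈ Finset.range (k - 2),
            (∑ j ∈ Finset.univ.filter (fun j : Fin (k - 2) => t ≤ j.val), (i j : ℤ)) ^ 2)
         + ((m - l - ∑ j, ((j.val : ℤ) + 2) * (i j : ℤ)) + ∑ j, (i j : ℤ)) ^ 2)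
    * qPoch q q l.toNat
    * (∏ j, qFactInv q (i j : ℤ))
    * qFactInv q (m - l - ∑ j, ((j.val : ℤ) + 2) * (i j : ℤ))
    * qFactInv q (2 * l + ∑ j, ((j.val : ℤ) + 1) * (i j : ℤ) - m)

/-! ### The one-variable summation -/

lemma qPoch_succ (a q : ℂ) (n : ℕ) : qPoch a q (n + 1) = qPoch a q n * (1 - a * q ^ n) := by
  simp [qPoch, Finset.prod_range_succ]

lemma qPoch_succ_left (a q : ℂ) (n : ℕ) :
    qPoch a q (n + 1) = (1 - a) * qPoch (a * q) q n := by
  simp only [qPoch, Finset.prod_range_succ']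
  rw [mul_comm]
  simp [pow_succ', mul_assoc]

lemma qPoch_add (a q : ℂ) (r s : ℕ) :
    qPoch a q (r + s) = qPoch a q r * qPoch (a * q ^ r) q s := by
  simp [qPoch, Finset.prod_range_add, pow_add, mul_assoc]

lemma qPoch_ne_zero {q : ℂ} (hq1 : ‖q‖ < 1) (n : ℕ) : qPoch q q n ≠ 0 := by
  rw [qPoch, Finset.prod_ne_zero_iff]
  intro j _ h
  have h1 : q ^ (j + 1) = 1 := by rw [pow_succ']; linear_combination -h
  have h2 : ‖q‖ ^ (j + 1) = 1 := by rw [← norm_pow, h1, norm_one]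
  have := pow_lt_one₀ (norm_nonneg q) hq1 (Nat.succ_ne_zero j)
  simp_all

lemma qPoch_eq_zero {q : ℂ} (hq : q ≠ 0) (N l : ℕ) (hN : 1 ≤ N) (h : N ≤ l) :
    qPoch (q ^ (1 - (N : ℤ))) q l = 0 := by
  rw [qPoch, Finset.prod_eq_zero_iff]
  refine ⟨N - 1, by simp; omega, ?_⟩
  rw [← zpow_natCast, ← zpow_add₀ hq, Nat.cast_sub hN]
  simp

/-- Contiguous relation
`(c;q)_{s+1} - (cq;q)_{s+1} = -c (1 - q^{s+1}) (cq;q)_s`. -/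
lemma qPoch_contig (c q : ℂ) (s : ℕ) :
    qPoch c q (s + 1) = qPoch (c * q) q (s + 1) - c * (1 - q ^ (s + 1)) * qPoch (c * q) q s := by
  rw [qPoch_succ_left, qPoch_succ]; ring

/-- Terminating q-Chu–Vandermonde sum with lower parameter `0`. -/
lemma chu {q : ℂ} (hq : q ≠ 0) (hq1 : ‖q‖ < 1) (M : ℕ) : ∀ (a : ℂ),
    ∑ s ∈ Finset.range (M + 1),
      q ^ s * (qPoch q q s)⁻¹ * (qPoch a q s * qPoch (q ^ (-(M : ℤ))) q s) = a ^ M := by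
  induction M with
  | zero => intro a; simp [qPoch]
  | succ M ih =>
    intro a
    set c : ℂ := q ^ (-((M + 1 : ℕ) : ℤ)) with hc
    have hcq : c * q = q ^ (-(M : ℤ)) := by
      rw [hc, ← zpow_add_one₀ hq]; congr 1; push_cast; ring
    have hz : qPoch (c * q) q (M + 1) = 0 := by
      have := qPoch_eq_zero hq (M + 1) (M + 1) (by omega) le_rfl
      rw [hcq]; convert this using 3; push_cast; ring
    have h1 := ih a
    have h2 := ih (a * q)
    rw [← hcq] at h1 h2
    -- The sum for `c * q` may be extended by its vanishing term of index `M + 1`.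
    have h1' : ∑ s ∈ Finset.range (M + 1 + 1),
        q ^ s * (qPoch q q s)⁻¹ * (qPoch a q s * qPoch (c * q) q s) = a ^ M := by
      rw [Finset.sum_range_succ, h1, hz]; simp
    rw [Finset.sum_range_succ'] at h1' ⊢
    have key : ∀ s, q ^ (s + 1) * (qPoch q q (s + 1))⁻¹ * (qPoch a q (s + 1) * qPoch c q (s + 1))
        = q ^ (s + 1) * (qPoch q q (s + 1))⁻¹ * (qPoch a q (s + 1) * qPoch (c * q) q (s + 1))
          - (c * q) * (1 - a) *
            (q ^ s * (qPoch q q s)⁻¹ * (qPoch (a * q) q s * qPoch (c * q) q s)) := by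
      intro s
      have e1 := qPoch_ne_zero hq1 (s + 1)
      have e0 := qPoch_ne_zero hq1 s
      rw [qPoch_contig c, qPoch_succ_left a]
      have e2 : qPoch q q (s + 1) = qPoch q q s * (1 - q ^ (s + 1)) := by
        rw [qPoch_succ]; ring
      rw [e2] at e1 ⊢
      have e3 := right_ne_zero_of_mul e1
      field_simp
      ring
    simp only [key, Finset.sum_sub_distrib, ← Finset.mul_sum, h2]
    have hcM : c * q * q ^ M = 1 := by
      rw [hcq, ← zpow_natCast, ← zpow_add₀ hq]; simp
    have e : ∀ x : ℂ, qPoch x q 0 = 1 := fun x => by simp [qPoch]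
    simp only [e] at h1' ⊢
    rw [mul_pow]
    linear_combination h1' - (1 - a) * a ^ M * hcM

/-- `A(n) = (q^N;q)_n (q^{1-N};q)_n`. -/
noncomputable def pochPair (N : ℕ) (q : ℂ) (n : ℕ) : ℂ :=
  qPoch (q ^ (N : ℤ)) q n * qPoch (q ^ (1 - (N : ℤ))) q n

lemma pochPair_eq_zero {q : ℂ} (hq : q ≠ 0) {N n : ℕ} (hN : 1 ≤ N) (h : N ≤ n) :
    pochPair N q n = 0 := by
  rw [pochPair, qPoch_eq_zero hq N n hN h, mul_zero]

lemma qFactInv_natCast (q : ℂ) (s : ℕ) : qFactInv q (s : ℤ) = (qPoch q q s)⁻¹ := by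
  simp [qFactInv]

lemma qFactInv_neg (q : ℂ) {a : ℤ} (h : a < 0) : qFactInv q a = 0 := by
  simp [qFactInv, not_le.mpr h]

/-- One step of the Bailey chain. -/
lemma tsum_poch {q : ℂ} (hq : q ≠ 0) (hq1 : ‖q‖ < 1) {N : ℕ} (hN : 1 ≤ N) (r : ℕ) :
    ∑' s : ℕ, q ^ s * qFactInv q (s : ℤ) * pochPair N q (s + r)
      = q ^ ((N : ℤ) * (N - 1) - r ^ 2 - r) * pochPair N q r := by
  rcases le_or_gt N r with h | h
  · rw [pochPair_eq_zero hq hN h, mul_zero]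
    simp [pochPair_eq_zero hq hN (h.trans (Nat.le_add_left r _))]
  · obtain ⟨M, rfl⟩ : ∃ M, N = M + r + 1 := ⟨N - r - 1, by omega⟩
    rw [tsum_eq_sum (s := Finset.range (M + 1))]
    · have hc := chu hq hq1 M (q ^ ((M + r + 1 : ℕ) : ℤ) * q ^ r)
      have e1 : q ^ (1 - ((M + r + 1 : ℕ) : ℤ)) * q ^ r = q ^ (-(M : ℤ)) := by
        rw [← zpow_natCast q r, ← zpow_add₀ hq]; congr 1; push_cast; ring
      have e2 : (q ^ ((M + r + 1 : ℕ) : ℤ) * q ^ r) ^ M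
          = q ^ (((M + r + 1 : ℕ) : ℤ) * (((M + r + 1 : ℕ) : ℤ) - 1) - r ^ 2 - r) := by
        rw [← zpow_natCast q r, ← zpow_add₀ hq, ← zpow_natCast, ← zpow_mul]
        congr 1; push_cast; ring
      rw [← e2, ← hc, Finset.sum_mul]
      refine Finset.sum_congr rfl fun s _ => ?_
      rw [qFactInv_natCast, pochPair, pochPair, add_comm s r, qPoch_add, qPoch_add, e1]
      ring
    · intro s hs
      rw [pochPair_eq_zero hq hN, mul_zero]
      simp at hs; omega

/-! ### The multiple sum -/

/-- `n_1² + n_2² + ⋯ + n_d²`, where `n_{t+1} = ∑_{j ≥ t} i j` (indices of `i` start at `0`). -/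
def tailSq (d : ℕ) (i : Fin d → ℕ) : ℤ :=
  ∑ t ∈ Finset.range d,
    (∑ j ∈ Finset.univ.filter (fun j : Fin d => t ≤ j.val), (i j : ℤ)) ^ 2

lemma tailSq_cons (d s : ℕ) (i : Fin d → ℕ) :
    tailSq (d + 1) (Fin.cons s i) = ((s : ℤ) + ∑ j, (i j : ℤ)) ^ 2 + tailSq d i := by
  rw [tailSq, Finset.sum_range_succ', add_comm, tailSq]
  congr 1
  · simp [Fin.sum_univ_succ]
  · refine Finset.sum_congr rfl fun t _ => ?_
    simp [Finset.sum_filter, Fin.sum_univ_succ]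

/-- Summand of the `d`-fold sum:
`q^{n_1 + ⋯ + n_d + n_2² + ⋯ + n_d²} A(n_1) / ∏ (q;q)_{i j}`. -/
noncomputable def chainTerm (N : ℕ) (q : ℂ) (d : ℕ) (i : Fin d → ℕ) : ℂ :=
  q ^ ((∑ j, ((j.val : ℤ) + 1) * (i j : ℤ)) + tailSq d i - (∑ j, (i j : ℤ)) ^ 2)
    * (∏ j, qFactInv q (i j : ℤ)) * pochPair N q (∑ j, i j)

lemma chainTerm_cons {q : ℂ} (hq : q ≠ 0) (N d s : ℕ) (i : Fin d → ℕ) :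
    chainTerm N q (d + 1) (Fin.cons s i) =
      q ^ ((∑ j, ((j.val : ℤ) + 1) * (i j : ℤ)) + ∑ j, (i j : ℤ) + tailSq d i)
        * (∏ j, qFactInv q (i j : ℤ)) *
        (q ^ s * qFactInv q (s : ℤ) * pochPair N q (s + ∑ j, i j)) := by
  have e : (∑ j, ((j.val : ℤ) + 1) * ((Fin.cons s i : Fin (d + 1) → ℕ) j : ℤ))
      = s + ((∑ j, ((j.val : ℤ) + 1) * (i j : ℤ)) + ∑ j, (i j : ℤ)) := by
    rw [Fin.sum_univ_succ, ← Finset.sum_add_distrib]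
    simp [add_mul]
  rw [chainTerm, tailSq_cons, e]
  simp only [Fin.sum_univ_succ, Fin.prod_univ_succ, Fin.cons_zero, Fin.cons_succ]
  rw [show ∀ a b c x : ℤ, a + (b + c) + (x ^ 2 + tailSq d i) - x ^ 2 = a + (b + c + tailSq d i) by
    intros; ring, zpow_add₀ hq, zpow_natCast]
  ring

lemma chainTerm_support {q : ℂ} (hq : q ≠ 0) {N : ℕ} (hN : 1 ≤ N) (d : ℕ) :
    (Function.support (chainTerm N q d)).Finite := by
  refine (Set.Finite.pi' (fun _ : Fin d => Set.finite_Iio N)).subset fun i hi j => ?_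
  by_contra h
  apply hi
  rw [chainTerm, pochPair_eq_zero hq hN, mul_zero]
  exact (not_lt.mp h).trans (Finset.single_le_sum (f := i) (fun _ _ => Nat.zero_le _)
    (Finset.mem_univ j))

lemma tsum_term {q : ℂ} (hq : q ≠ 0) (hq1 : ‖q‖ < 1) {N : ℕ} (hN : 1 ≤ N) (d : ℕ) :
    ∑' i, chainTerm N q d i = (q ^ ((N : ℤ) * (N - 1))) ^ d := by
  induction d with
  | zero =>
    rw [tsum_eq_single (fun _ => 0) (fun b hb => absurd (Subsingleton.elim _ _) hb)]
    simp [chainTerm, tailSq, pochPair, qPoch]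
  | succ d ih =>
    let E := (Equiv.prodComm (Fin d → ℕ) ℕ).trans (Fin.consEquiv (fun _ : Fin (d + 1) => ℕ))
    have hs : Summable (fun p => chainTerm N q (d + 1) (E p)) :=
      E.summable_iff.mpr (summable_of_hasFiniteSupport (chainTerm_support hq hN (d + 1)))
    rw [← E.tsum_eq, hs.tsum_prod, pow_succ, ← ih, ← tsum_mul_right]
    refine tsum_congr fun i => ?_
    have hE : ∀ s, E (i, s) = Fin.cons s i := fun s => rfl
    simp only [hE, chainTerm_cons hq]
    rw [tsum_mul_left, tsum_poch hq hq1 hN, chainTerm]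
    push_cast
    have : ∀ w n t c : ℤ, q ^ (w + n + t) * q ^ (c - n ^ 2 - n) = q ^ (w + t - n ^ 2) * q ^ c := by
      intro w n t c
      rw [← zpow_add₀ hq, ← zpow_add₀ hq]; congr 1; ring
    linear_combination (∏ j, qFactInv q (i j : ℤ)) * pochPair N q (∑ j, i j) *
      this (∑ j, ((j.val : ℤ) + 1) * (i j : ℤ)) (∑ j, (i j : ℤ)) (tailSq d i) ((N : ℤ) * (N - 1))

/-! ### Identification with the double sum -/

/-- Summand of `f^{d+2}_{m,l}(q)`, indexed by `i = (i_3, …, i_{d+2})`. -/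
noncomputable def fTerm (d : ℕ) (q : ℂ) (m l : ℤ) (i : Fin d → ℕ) : ℂ :=
  q ^ (tailSq d i + ((m - l - ∑ j, ((j.val : ℤ) + 2) * (i j : ℤ)) + ∑ j, (i j : ℤ)) ^ 2)
    * qPoch q q l.toNat
    * (∏ j, qFactInv q (i j : ℤ))
    * qFactInv q (m - l - ∑ j, ((j.val : ℤ) + 2) * (i j : ℤ))
    * qFactInv q (2 * l + ∑ j, ((j.val : ℤ) + 1) * (i j : ℤ) - m)

lemma fpoly_eq (d : ℕ) (q : ℂ) (m l : ℤ) : fpoly (d + 2) q m l = ∑' i, fTerm d q m l i := rfl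

/-- A nonvanishing summand has `i_2 ≥ 0` and `i_1 ≥ 0`. -/
lemma fTerm_ne_zero {d : ℕ} {q : ℂ} {m l : ℤ} {i : Fin d → ℕ} (h : fTerm d q m l i ≠ 0) :
    0 ≤ m - l - ∑ j, ((j.val : ℤ) + 2) * (i j : ℤ) ∧
    0 ≤ 2 * l + ∑ j, ((j.val : ℤ) + 1) * (i j : ℤ) - m := by
  constructor
  · by_contra h'
    exact h (by rw [fTerm, qFactInv_neg q (a := m - l - _) (not_le.mp h')]; ring)
  · by_contra h'
    exact h (by rw [fTerm, qFactInv_neg q (a := 2 * l + _ - m) (not_le.mp h')]; ring)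

lemma sum_shift (d : ℕ) (i : Fin d → ℕ) :
    ∑ j, ((j.val : ℤ) + 2) * (i j : ℤ)
      = ∑ j, ((j.val : ℤ) + 1) * (i j : ℤ) + ∑ j, (i j : ℤ) := by
  rw [← Finset.sum_add_distrib]
  exact Finset.sum_congr rfl fun j _ => by ring

lemma fpoly_eq_zero (d : ℕ) (q : ℂ) (m l : ℤ) (h : ((d + 2 : ℕ) : ℤ) * l < m) :
    fpoly (d + 2) q m l = 0 := by
  rw [fpoly_eq]
  convert tsum_zero with i
  by_contra hne
  obtain ⟨h2, h1⟩ := fTerm_ne_zero hne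
  have hs := sum_shift d i
  have hb : ∑ j, ((j.val : ℤ) + 1) * (i j : ℤ) ≤ d * ∑ j, (i j : ℤ) := by
    rw [Finset.mul_sum]
    refine Finset.sum_le_sum fun j _ => ?_
    have := j.2
    exact mul_le_mul_of_nonneg_right (by omega) (by positivity)
  have hS : ∑ j, (i j : ℤ) ≤ l := by linarith
  have := mul_le_mul_of_nonneg_left hS (Nat.cast_nonneg (α := ℤ) d)
  push_cast at h
  linarith

lemma fpoly_of_lt (d : ℕ) (q : ℂ) {m l : ℕ} (hl : m < l) : fpoly (d + 2) q m l = 0 := by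
  rw [fpoly_eq]
  convert tsum_zero with i
  by_contra hne
  have := (fTerm_ne_zero hne).1
  have h0 : 0 ≤ ∑ j, ((j.val : ℤ) + 2) * (i j : ℤ) :=
    Finset.sum_nonneg fun j _ => by positivity
  omega

lemma fpoly_zero_zero (d : ℕ) (q : ℂ) : fpoly (d + 2) q 0 0 = 1 := by
  rw [fpoly_eq, tsum_eq_single (fun _ => 0)]
  · simp [fTerm, tailSq, qFactInv, qPoch]
  · intro i hi
    by_contra hne
    have h3 := (fTerm_ne_zero hne).1
    apply hi
    funext j
    have h4 : ((j.val : ℤ) + 2) * (i j : ℤ) ≤ ∑ j, ((j.val : ℤ) + 2) * (i j : ℤ) :=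
      Finset.single_le_sum (f := fun j : Fin d => ((j.val : ℤ) + 2) * (i j : ℤ))
        (fun j _ => by positivity) (Finset.mem_univ j)
    have h5 : (i j : ℤ) ≤ 0 := by nlinarith
    omega

lemma tsum_eq_add_sum_Icc (F : ℕ → ℂ) (c : ℂ) (m : ℕ) (h : ∀ l, m < l → F l = 0) :
    ∑' l, c * F l = c * F 0 + c * ∑ l ∈ Finset.Icc 1 m, F l := by
  rw [tsum_eq_sum (s := Finset.range (m + 1))]
  · rw [Finset.sum_range_succ', add_comm, ← Finset.mul_sum, Finset.range_eq_Ico,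
      Finset.sum_Ico_add' F 0 m 1]
    rfl
  · intro l hl
    rw [h l (by simpa using hl), mul_zero]

/-- Summand of the triple sum over `m`, `l` and `(i_3, …, i_{d+2})`. -/
noncomputable def tripleTerm (N d : ℕ) (q : ℂ) (p : ℕ × ℕ × (Fin d → ℕ)) : ℂ :=
  q ^ p.1 * (fTerm d q p.1 p.2.1 p.2.2 / qPoch q q p.2.1 * pochPair N q p.2.1)

/-- `(i_1, i_2, i) ↦ (m, l, i)`. -/
def toTriple (d : ℕ) (p : ℕ × ℕ × (Fin d → ℕ)) : ℕ × ℕ × (Fin d → ℕ) :=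
  (p.1 + 2 * p.2.1 + ∑ j, (j.val + 3) * p.2.2 j, p.1 + p.2.1 + ∑ j, p.2.2 j, p.2.2)

lemma toTriple_injective (d : ℕ) : Function.Injective (toTriple d) := by
  rintro ⟨a, b, i⟩ ⟨a', b', i'⟩ h
  simp only [toTriple, Prod.mk.injEq] at h
  obtain ⟨h1, h2, rfl⟩ := h
  simp only [Prod.mk.injEq, and_true]
  omega

lemma sum_shift_nat (d : ℕ) (i : Fin d → ℕ) :
    ((∑ j, (j.val + 3) * i j : ℕ) : ℤ)
      = ∑ j, ((j.val : ℤ) + 1) * (i j : ℤ) + 2 * ∑ j, (i j : ℤ) := by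
  push_cast
  rw [Finset.mul_sum, ← Finset.sum_add_distrib]
  exact Finset.sum_congr rfl fun j _ => by ring

lemma tripleTerm_support (N d : ℕ) (q : ℂ) :
    Function.support (tripleTerm N d q) ⊆ Set.range (toTriple d) := by
  rintro ⟨m, l, i⟩ h
  have hne : fTerm d q m l i ≠ 0 := fun h0 => h (by simp [tripleTerm, h0])
  obtain ⟨h2, h1⟩ := fTerm_ne_zero hne
  obtain ⟨b, hb⟩ := Int.eq_ofNat_of_zero_le h2
  obtain ⟨a, ha⟩ := Int.eq_ofNat_of_zero_le h1
  have hs := sum_shift d i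
  have hs' := sum_shift_nat d i
  have hc : ((∑ j, i j : ℕ) : ℤ) = ∑ j, (i j : ℤ) := by push_cast; rfl
  refine ⟨(a, b, i), ?_⟩
  simp only [toTriple, Prod.mk.injEq, and_true]
  omega

lemma tripleTerm_toTriple {q : ℂ} (hq : q ≠ 0) (hq1 : ‖q‖ < 1) (N d a b : ℕ) (i : Fin d → ℕ) :
    tripleTerm N d q (toTriple d (a, b, i))
      = chainTerm N q (d + 2) (Fin.cons a (Fin.cons b i)) := by
  have hs := sum_shift d i
  have hs' := sum_shift_nat d i
  have hc : ((∑ j, i j : ℕ) : ℤ) = ∑ j, (i j : ℤ) := by push_cast; rfl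
  rw [chainTerm_cons hq, tailSq_cons]
  have e : (∑ j, ((j.val : ℤ) + 1) * ((Fin.cons b i : Fin (d + 1) → ℕ) j : ℤ))
      = b + ((∑ j, ((j.val : ℤ) + 1) * (i j : ℤ)) + ∑ j, (i j : ℤ)) := by
    rw [Fin.sum_univ_succ, ← Finset.sum_add_distrib]
    simp [add_mul]
  rw [e]
  simp only [Fin.sum_univ_succ, Fin.prod_univ_succ, Fin.cons_zero, Fin.cons_succ]
  simp only [tripleTerm, toTriple, fTerm, Int.toNat_natCast]
  set m := a + 2 * b + ∑ j, (j.val + 3) * i j with hm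
  set l := a + b + ∑ j, i j with hl
  have e2 : (m : ℤ) - l - ∑ j, ((j.val : ℤ) + 2) * (i j : ℤ) = b := by omega
  have e1 : 2 * (l : ℤ) + ∑ j, ((j.val : ℤ) + 1) * (i j : ℤ) - m = a := by omega
  have e3 : a + (b + ∑ j, i j) = l := by omega
  rw [e1, e2, e3]
  have hl0 := qPoch_ne_zero hq1 l
  have hp : q ^ m * q ^ (tailSq d i + ((b : ℤ) + ∑ j, (i j : ℤ)) ^ 2)
      = q ^ ((b : ℤ) + ((∑ j, ((j.val : ℤ) + 1) * (i j : ℤ)) + ∑ j, (i j : ℤ))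
        + ((b : ℤ) + ∑ j, (i j : ℤ)) + (((b : ℤ) + ∑ j, (i j : ℤ)) ^ 2 + tailSq d i)) * q ^ a := by
    rw [← zpow_natCast q m, ← zpow_natCast q a, ← zpow_add₀ hq, ← zpow_add₀ hq]
    congr 1
    have : (m : ℤ) = a + 2 * b + (∑ j, ((j.val : ℤ) + 1) * (i j : ℤ) + 2 * ∑ j, (i j : ℤ)) := by
      omega
    rw [this]; ring
  field_simp
  linear_combination qFactInv q b * qFactInv q a * (∏ j, qFactInv q (i j : ℤ)) * pochPair N q l * hp

/-- `1 + Σ_{m≥1} q^m Σ_{l=1}^{m} (f^k_{m,l}(q)/(q;q)_l) (q^N;q)_l (q^{1−N};q)_l = q^{kN(N−1)}`;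
    moreover only finitely many terms are nonzero: every term with `l ≥ N` vanishes since
    `(q^{1−N};q)_l = 0`, and `f^k_{m,l}(q) = 0` for `m > kl`. -/
theorem statement8 (k : ℕ) (hk : 2 ≤ k) (N : ℕ) (hN : 1 ≤ N) (q : ℂ)
    (hq0 : 0 < ‖q‖) (hq1 : ‖q‖ < 1) :
    (∀ l : ℕ, N ≤ l → qPoch (q ^ (1 - (N : ℤ))) q l = 0) ∧
    (∀ m l : ℤ, 0 ≤ l → (k : ℤ) * l < m → fpoly k q m l = 0) ∧
    1 + (∑' m : ℕ, q ^ m *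
          ∑ l ∈ Finset.Icc 1 m, fpoly k q (m : ℤ) (l : ℤ) / qPoch q q l *
            qPoch (q ^ (N : ℤ)) q l * qPoch (q ^ (1 - (N : ℤ))) q l)
      = q ^ (k * N * (N - 1)) := by
  have hq : q ≠ 0 := norm_pos_iff.mp hq0
  obtain ⟨d, rfl⟩ : ∃ d, k = d + 2 := ⟨k - 2, by omega⟩
  refine ⟨fun l hl => qPoch_eq_zero hq N l hN hl, fun m l _ h => fpoly_eq_zero d q m l h, ?_⟩
  -- The triple sum is the chain sum, by the change of variables `toTriple`.
  let E : ℕ × ℕ × (Fin d → ℕ) ≃ (Fin (d + 2) → ℕ) :=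
    ((Equiv.refl ℕ).prodCongr (Fin.consEquiv (fun _ : Fin (d + 1) => ℕ))).trans
      (Fin.consEquiv (fun _ : Fin (d + 2) => ℕ))
  have hcomp : tripleTerm N d q ∘ toTriple d = chainTerm N q (d + 2) ∘ E := by
    funext ⟨a, b, i⟩
    exact tripleTerm_toTriple hq hq1 N d a b i
  have hsum : Summable (tripleTerm N d q) := by
    rw [← (toTriple_injective d).summable_iff, hcomp, E.summable_iff]
    · exact summable_of_hasFiniteSupport (chainTerm_support hq hN (d + 2))
    · intro x hx
      by_contra h
      exact hx (tripleTerm_support N d q h)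
  have htot : ∑' p, tripleTerm N d q p = (q ^ ((N : ℤ) * (N - 1))) ^ (d + 2) := by
    rw [← (toTriple_injective d).tsum_eq (tripleTerm_support N d q), ← tsum_term hq hq1 hN,
      ← E.tsum_eq]
    exact tsum_congr fun p => congrFun hcomp p
  -- Everything outside `1 ≤ l ≤ m` vanishes, except at `m = l = 0`, where the term is `1`.
  have hm : ∀ m : ℕ, ∑' p : ℕ × (Fin d → ℕ), tripleTerm N d q (m, p)
      = (if m = 0 then 1 else 0) + q ^ m *
        ∑ l ∈ Finset.Icc 1 m, fpoly (d + 2) q (m : ℤ) (l : ℤ) / qPoch q q l *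
            qPoch (q ^ (N : ℤ)) q l * qPoch (q ^ (1 - (N : ℤ))) q l := by
    intro m
    have h1 : Summable fun p : ℕ × (Fin d → ℕ) => tripleTerm N d q (m, p) := hsum.prod_factor m
    rw [h1.tsum_prod]
    have h2 : ∀ l : ℕ, ∑' i : Fin d → ℕ, tripleTerm N d q (m, l, i)
        = q ^ m * (fpoly (d + 2) q m l / qPoch q q l *
            qPoch (q ^ (N : ℤ)) q l * qPoch (q ^ (1 - (N : ℤ))) q l) := by
      intro l
      simp only [tripleTerm]
      rw [tsum_mul_left, tsum_mul_right, tsum_div_const, ← fpoly_eq, pochPair]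
      ring
    simp only [h2]
    rw [tsum_eq_add_sum_Icc (fun l : ℕ => fpoly (d + 2) q m l / qPoch q q l *
            qPoch (q ^ (N : ℤ)) q l * qPoch (q ^ (1 - (N : ℤ))) q l) (q ^ m) m
          (fun l hl => by simp [fpoly_of_lt d q hl])]
    congr 1
    rcases Nat.eq_zero_or_pos m with rfl | hpos
    · simp [fpoly_zero_zero, qPoch]
    · have h0 := fpoly_eq_zero d q m 0 (by simpa using hpos)
      simp [h0, hpos.ne']
  have hs0 : Summable fun m : ℕ => (if m = 0 then (1 : ℂ) else 0) :=
    (hasSum_ite_eq 0 (1 : ℂ)).summable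
  have hs1 := hsum.prod
  have hs2 := hs1.sub hs0
  rw [hsum.tsum_prod] at htot
  simp only [hm, add_sub_cancel_left] at hs2 htot
  rw [hs0.tsum_add hs2, tsum_ite_eq] at htot
  rw [htot, ← zpow_natCast, ← zpow_natCast, ← zpow_mul]
  congr 1
  push_cast [Nat.cast_sub hN]
  ring
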